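/- Let V be an 𝔽₂-linear subspace of 𝔽₂^{2g} of dimension i, let τ₁ ∈ ℍ_k and τ₂ ∈ ℍ_{g−k}, let π₁ and π₂ denote the projections of 𝔽₂^{2g} = 𝔽₂^{2k} ⊕ 𝔽₂^{2(g−k)} to the two summands (corresponding to the decomposition of the group of points of order two of a product), and set n := dim π₁(V), m := dim π₂(V). Then for every integer s ≥ 1: P_V(τ₁ ⊕ τ₂)^s = P_{π₁(V)}(τ₁)^{2^{i−n}s} · P_{π₂(V)}(τ₂)^{2^{i−m}s}. -/

import Mathlib

open scoped BigOperators

abbrev ThetaChar (g : ℕ) := (Fin g → ZMod 2) × (Fin g → ZMod 2)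

/-- Theta constant with characteristic `v = [ε; δ]`. -/
noncomputable def theta {g : ℕ} (v : ThetaChar g) (τ : Matrix (Fin g) (Fin g) ℂ) : ℂ :=
  ∑' n : Fin g → ℤ,
    Complex.exp ((Real.pi : ℂ) * Complex.I *
      ((∑ i, ∑ j, ((n i : ℂ) + ((v.1 i).val : ℂ) / 2) * τ i j *
          ((n j : ℂ) + ((v.1 j).val : ℂ) / 2)) +
        ∑ i, ((n i : ℂ) + ((v.1 i).val : ℂ) / 2) * ((v.2 i).val : ℂ)))

/-- Siegel upper half-space membership. -/
def IsSiegel {g : ℕ} (τ : Matrix (Fin g) (Fin g) ℂ) : Prop :=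
  τ.IsSymm ∧ Matrix.PosDef (τ.map Complex.im)

noncomputable def Pset {g : ℕ} (M : Set (ThetaChar g)) (τ : Matrix (Fin g) (Fin g) ℂ) : ℂ :=
  ∏ᶠ v ∈ M, theta v τ

noncomputable def Pform (g i s : ℕ) (τ : Matrix (Fin g) (Fin g) ℂ) : ℂ :=
  ∑ᶠ V ∈ {V : Submodule (ZMod 2) (ThetaChar g) | Module.finrank (ZMod 2) ↥V = i},
    Pset (V : Set (ThetaChar g)) τ ^ s

noncomputable def Nsub (n m i : ℕ) : ℕ :=
  Nat.card {V : Submodule (ZMod 2) ((Fin n → ZMod 2) × (Fin m → ZMod 2)) //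
    Module.finrank (ZMod 2) ↥V = i ∧
    V.map (LinearMap.fst (ZMod 2) (Fin n → ZMod 2) (Fin m → ZMod 2)) = ⊤ ∧
    V.map (LinearMap.snd (ZMod 2) (Fin n → ZMod 2) (Fin m → ZMod 2)) = ⊤}

noncomputable def blockDiag {k l : ℕ} (τ₁ : Matrix (Fin k) (Fin k) ℂ)
    (τ₂ : Matrix (Fin l) (Fin l) ℂ) : Matrix (Fin (k + l)) (Fin (k + l)) ℂ :=
  Matrix.reindex finSumFinEquiv finSumFinEquiv (Matrix.fromBlocks τ₁ 0 0 τ₂)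

def chproj1 (k l : ℕ) : ThetaChar (k + l) →ₗ[ZMod 2] ThetaChar k :=
  (LinearMap.funLeft (ZMod 2) (ZMod 2) (Fin.castAdd l)).prodMap
    (LinearMap.funLeft (ZMod 2) (ZMod 2) (Fin.castAdd l))

def chproj2 (k l : ℕ) : ThetaChar (k + l) →ₗ[ZMod 2] ThetaChar l :=
  (LinearMap.funLeft (ZMod 2) (ZMod 2) (Fin.natAdd k)).prodMap
    (LinearMap.funLeft (ZMod 2) (ZMod 2) (Fin.natAdd k))

def weil {g : ℕ} (v w : ThetaChar g) : ZMod 2 :=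
  (∑ i, v.1 i * w.2 i) + (∑ i, v.2 i * w.1 i)

def evenChar {g : ℕ} (v : ThetaChar g) : Prop := (∑ i, v.1 i * v.2 i) = 0

def qform {g : ℕ} (Δ v : ThetaChar g) : ZMod 2 :=
  (∑ i, v.1 i * v.2 i) + (∑ i, Δ.1 i * v.2 i) + (∑ i, Δ.2 i * v.1 i)

/-!
The lattice sum defining a theta constant converges absolutely because `Im τ ≥ c · 1` for some
`c > 0`, so the sum is dominated by a product of one-dimensional Gaussian sums. For a block diagonal
period matrix the exponent splits, hence `θ[v](τ₁ ⊕ τ₂) = θ[π₁ v](τ₁) · θ[π₂ v](τ₂)`. In the product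
over `v ∈ V`, each factor `θ[w](τ₁)` with `w ∈ π₁(V)` occurs once for every point of the fiber of
`π₁|_V` over `w`, that is `|ker π₁|_V| = 2 ^ (dim V - dim π₁(V))` times; likewise for `π₂`.
-/

section ProductsOverFibers

theorem prod_comp_addMonoidHom_of_surjective {G H M : Type*} [AddGroup G] [AddGroup H]
    [Fintype G] [Fintype H] [CommMonoid M] (φ : G →+ H) (hφ : Function.Surjective φ) (f : H → M) :
    ∏ x, f (φ x) = (∏ y, f y) ^ Nat.card φ.ker := by
  classical
  have card_fiber (y : H) : Fintype.card {x // φ x = y} = Nat.card φ.ker := by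
    rw [← Nat.card_eq_fintype_card]
    exact Nat.card_congr (AddMonoidHom.fiberEquivKerOfSurjective hφ y)
  calc ∏ x, f (φ x) = ∏ y, ∏ _x : {x // φ x = y}, f y := (Fintype.prod_fiberwise' φ f).symm
    _ = (∏ y, f y) ^ Nat.card φ.ker := by
      simp only [Finset.prod_const, Finset.card_univ, card_fiber, Finset.prod_pow]

variable {K E F : Type*} [DivisionRing K] [AddCommGroup E] [Module K E] [AddCommGroup F]
  [Module K F]

theorem natCard_ker_submoduleMap (V : Submodule K E) [FiniteDimensional K V] (φ : E →ₗ[K] F) :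
    Nat.card (φ.submoduleMap V).ker =
      Nat.card K ^ (Module.finrank K V - Module.finrank K (V.map φ)) := by
  have rank_nullity := (φ.submoduleMap V).finrank_range_add_finrank_ker
  rw [LinearMap.range_eq_top.2 (φ.submoduleMap_surjective V), finrank_top] at rank_nullity
  rw [Module.natCard_eq_pow_finrank (K := K), ← rank_nullity, Nat.add_sub_cancel_left]

theorem finprod_mem_submodule_comp_linearMap {M : Type*} [CommMonoid M] (V : Submodule K E)
    [Finite V] (φ : E →ₗ[K] F) (f : F → M) :
    ∏ᶠ v ∈ (V : Set E), f (φ v) =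
      (∏ᶠ w ∈ (V.map φ : Set F), f w) ^
        Nat.card K ^ (Module.finrank K V - Module.finrank K (V.map φ)) := by
  have surj := φ.submoduleMap_surjective V
  have : Finite (V.map φ) := Finite.of_surjective _ surj
  have := Fintype.ofFinite V
  have := Fintype.ofFinite (V.map φ)
  rw [← finprod_set_coe_eq_finprod_mem, ← finprod_set_coe_eq_finprod_mem,
    ← natCard_ker_submoduleMap V φ]
  change ∏ᶠ v : V, f (φ.submoduleMap V v) = (∏ᶠ w : V.map φ, f w) ^ _
  rw [finprod_eq_prod_of_fintype, finprod_eq_prod_of_fintype]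
  exact prod_comp_addMonoidHom_of_surjective (φ.submoduleMap V).toAddMonoidHom surj fun w => f w

end ProductsOverFibers

section GaussianSums

theorem summable_pi_prod_of_nonneg {ι : Type*} [Fintype ι] {κ : ι → Type*} {f : ∀ i, κ i → ℝ}
    (hf₀ : ∀ i a, 0 ≤ f i a) (hf : ∀ i, Summable (f i)) :
    Summable fun x : ∀ i, κ i => ∏ i, f i (x i) := by
  classical
  refine summable_of_sum_le (c := ∏ i, ∑' a, f i a)
    (fun x => Finset.prod_nonneg fun i _ => hf₀ i _) fun u => ?_
  have subset_box : u ⊆ Fintype.piFinset fun i => u.image (· i) := fun x hx =>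
    Fintype.mem_piFinset.2 fun i => Finset.mem_image_of_mem _ hx
  calc ∑ x ∈ u, ∏ i, f i (x i)
      ≤ ∑ x ∈ Fintype.piFinset fun i => u.image (· i), ∏ i, f i (x i) :=
        Finset.sum_le_sum_of_subset_of_nonneg subset_box fun x _ _ =>
          Finset.prod_nonneg fun i _ => hf₀ i _
    _ = ∏ i, ∑ a ∈ u.image (· i), f i a := (Finset.prod_univ_sum _ _).symm
    _ ≤ ∏ i, ∑' a, f i a :=
        Finset.prod_le_prod (fun i _ => Finset.sum_nonneg fun a _ => hf₀ i a) fun i _ =>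
          (hf i).sum_le_tsum _ fun a _ => hf₀ i a

open scoped MatrixOrder in
theorem exists_pos_mul_dotProduct_self_le_of_posDef {ι : Type*} [Fintype ι] {A : Matrix ι ι ℝ}
    (hA : A.PosDef) : ∃ c > 0, ∀ x : ι → ℝ, c * (x ⬝ᵥ x) ≤ x ⬝ᵥ A.mulVec x := by
  classical
  cases isEmpty_or_nonempty ι
  · exact ⟨1, one_pos, fun x => by simp⟩
  obtain ⟨c, hc, hcA⟩ : ∃ c > 0, algebraMap ℝ (Matrix ι ι ℝ) c ≤ A :=
    (CFC.exists_pos_algebraMap_le_iff hA.isHermitian).2 fun _ => hA.isStrictlyPositive.spectrum_pos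
  refine ⟨c, hc, fun x => ?_⟩
  have nonneg := (Matrix.le_iff.1 hcA).dotProduct_mulVec_nonneg x
  rw [Matrix.sub_mulVec, dotProduct_sub, Algebra.algebraMap_eq_smul_one, Matrix.smul_mulVec,
    Matrix.one_mulVec, dotProduct_smul, star_trivial, smul_eq_mul] at nonneg
  linarith

open Real in
theorem summable_exp_neg_pi_mul_quadraticForm {ι : Type*} [Fintype ι] {A : Matrix ι ι ℝ}
    (hA : A.PosDef) (a : ι → ℝ) :
    Summable fun n : ι → ℤ => exp (-π * ((fun i => n i + a i) ⬝ᵥ A.mulVec fun i => n i + a i)) := by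
  obtain ⟨c, hc, hcA⟩ := exists_pos_mul_dotProduct_self_le_of_posDef hA
  have summable_gaussian : Summable fun n : ι → ℤ => ∏ i, exp (-π * (n i + a i) ^ 2 * c) :=
    summable_pi_prod_of_nonneg (f := fun i (p : ℤ) => exp (-π * (p + a i) ^ 2 * c))
      (fun _ _ => (exp_pos _).le) fun i => (HurwitzZeta.hasSum_int_evenKernel (a i) hc).summable
  refine summable_gaussian.of_nonneg_of_le (fun _ => (exp_pos _).le) fun n => ?_
  set x : ι → ℝ := fun i => n i + a i
  calc exp (-π * (x ⬝ᵥ A.mulVec x)) ≤ exp (-π * (c * (x ⬝ᵥ x))) :=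
        exp_le_exp.2 (mul_le_mul_of_nonpos_left (hcA x) (neg_nonpos.2 pi_pos.le))
    _ = ∏ i, exp (-π * x i ^ 2 * c) := by
        rw [← exp_sum, ← Finset.sum_mul, ← Finset.mul_sum, dotProduct]
        simp only [sq]
        ring_nf

end GaussianSums

section ThetaConstants

/-- The summand at `n ∈ ℤ^g` of the theta constant `θ[v](τ)`. -/
noncomputable def thetaTerm {g : ℕ} (v : ThetaChar g) (τ : Matrix (Fin g) (Fin g) ℂ)
    (n : Fin g → ℤ) : ℂ :=
  Complex.exp ((Real.pi : ℂ) * Complex.I *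
    ((∑ i, ∑ j, ((n i : ℂ) + ((v.1 i).val : ℂ) / 2) * τ i j *
        ((n j : ℂ) + ((v.1 j).val : ℂ) / 2)) +
      ∑ i, ((n i : ℂ) + ((v.1 i).val : ℂ) / 2) * ((v.2 i).val : ℂ)))

theorem theta_eq_tsum_thetaTerm {g : ℕ} (v : ThetaChar g) (τ : Matrix (Fin g) (Fin g) ℂ) :
    theta v τ = ∑' n, thetaTerm v τ n :=
  rfl

theorem norm_thetaTerm {g : ℕ} (v : ThetaChar g) (τ : Matrix (Fin g) (Fin g) ℂ) (n : Fin g → ℤ) :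
    ‖thetaTerm v τ n‖ =
      Real.exp (-Real.pi * ((fun i => (n i : ℝ) + (v.1 i).val / 2) ⬝ᵥ
        (τ.map Complex.im).mulVec fun i => (n i : ℝ) + (v.1 i).val / 2)) := by
  set x : Fin g → ℝ := fun i => (n i : ℝ) + (v.1 i).val / 2 with hx
  have hx_cast (i : Fin g) : (n i : ℂ) + ((v.1 i).val : ℂ) / 2 = (x i : ℂ) := by
    simp only [hx, Complex.ofReal_add, Complex.ofReal_div, Complex.ofReal_intCast,
      Complex.ofReal_natCast, Complex.ofReal_ofNat]
  have im_exponent : (∑ i, ∑ j, (x i : ℂ) * τ i j * x j + ∑ i, (x i : ℂ) * ((v.2 i).val : ℂ)).im =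
      x ⬝ᵥ (τ.map Complex.im).mulVec x := by
    simp [dotProduct, Matrix.mulVec, Finset.mul_sum, mul_assoc, -ZMod.natCast_val]
  rw [thetaTerm, Complex.norm_exp]
  simp only [hx_cast]
  rw [mul_assoc, Complex.re_ofReal_mul, Complex.I_mul_re, im_exponent, neg_mul, mul_neg]

theorem summable_norm_thetaTerm {g : ℕ} (v : ThetaChar g) {τ : Matrix (Fin g) (Fin g) ℂ}
    (hτ : (τ.map Complex.im).PosDef) : Summable fun n => ‖thetaTerm v τ n‖ := by
  simp only [norm_thetaTerm]
  exact summable_exp_neg_pi_mul_quadraticForm hτ fun i => (v.1 i).val / 2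

variable {k l : ℕ} {τ₁ : Matrix (Fin k) (Fin k) ℂ} {τ₂ : Matrix (Fin l) (Fin l) ℂ}

theorem thetaTerm_blockDiag_append (v : ThetaChar (k + l)) (n : Fin k → ℤ) (m : Fin l → ℤ) :
    thetaTerm v (blockDiag τ₁ τ₂) (Fin.append n m) =
      thetaTerm (chproj1 k l v) τ₁ n * thetaTerm (chproj2 k l v) τ₂ m := by
  rw [thetaTerm, thetaTerm, thetaTerm, ← Complex.exp_add, ← mul_add]
  congr 2
  simp only [Fin.sum_univ_add, blockDiag, chproj1, chproj2, LinearMap.prodMap_apply,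
    LinearMap.funLeft_apply, Fin.append_left, Fin.append_right, Matrix.reindex_apply,
    Matrix.submatrix_apply, finSumFinEquiv_symm_apply_castAdd, finSumFinEquiv_symm_apply_natAdd,
    Matrix.fromBlocks_apply₁₁, Matrix.fromBlocks_apply₁₂, Matrix.fromBlocks_apply₂₁,
    Matrix.fromBlocks_apply₂₂, Matrix.zero_apply, mul_zero, zero_mul, Finset.sum_const_zero,
    add_zero, zero_add]
  ring

theorem theta_blockDiag (hτ₁ : (τ₁.map Complex.im).PosDef) (hτ₂ : (τ₂.map Complex.im).PosDef)
    (v : ThetaChar (k + l)) :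
    theta v (blockDiag τ₁ τ₂) = theta (chproj1 k l v) τ₁ * theta (chproj2 k l v) τ₂ := by
  simp only [theta_eq_tsum_thetaTerm]
  rw [tsum_mul_tsum_of_summable_norm (summable_norm_thetaTerm _ hτ₁)
    (summable_norm_thetaTerm _ hτ₂), ← (Fin.appendEquiv k l).tsum_eq]
  exact tsum_congr fun p => thetaTerm_blockDiag_append v p.1 p.2

theorem Pset_blockDiag (hτ₁ : (τ₁.map Complex.im).PosDef) (hτ₂ : (τ₂.map Complex.im).PosDef)
    (V : Submodule (ZMod 2) (ThetaChar (k + l))) :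
    Pset (V : Set (ThetaChar (k + l))) (blockDiag τ₁ τ₂) =
      Pset (V.map (chproj1 k l) : Set (ThetaChar k)) τ₁ ^
          2 ^ (Module.finrank (ZMod 2) V - Module.finrank (ZMod 2) (V.map (chproj1 k l))) *
        Pset (V.map (chproj2 k l) : Set (ThetaChar l)) τ₂ ^
          2 ^ (Module.finrank (ZMod 2) V - Module.finrank (ZMod 2) (V.map (chproj2 k l))) := by
  have fiber_count₁ := finprod_mem_submodule_comp_linearMap V (chproj1 k l) (theta · τ₁)
  have fiber_count₂ := finprod_mem_submodule_comp_linearMap V (chproj2 k l) (theta · τ₂)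
  rw [Nat.card_zmod] at fiber_count₁ fiber_count₂
  simp only [Pset, theta_blockDiag hτ₁ hτ₂]
  rw [finprod_mem_mul_distrib (Set.toFinite _), fiber_count₁, fiber_count₂]

end ThetaConstants

theorem P_V_factorization (k l i n m s : ℕ) (hs : 1 ≤ s)
    (V : Submodule (ZMod 2) (ThetaChar (k + l)))
    (hV : Module.finrank (ZMod 2) ↥V = i)
    (hn : Module.finrank (ZMod 2) ↥(V.map (chproj1 k l)) = n)
    (hm : Module.finrank (ZMod 2) ↥(V.map (chproj2 k l)) = m)
    (τ₁ : Matrix (Fin k) (Fin k) ℂ) (τ₂ : Matrix (Fin l) (Fin l) ℂ)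
    (hτ₁ : IsSiegel τ₁) (hτ₂ : IsSiegel τ₂) :
    Pset (V : Set (ThetaChar (k + l))) (blockDiag τ₁ τ₂) ^ s =
      Pset (V.map (chproj1 k l) : Set (ThetaChar k)) τ₁ ^ (2 ^ (i - n) * s) *
        Pset (V.map (chproj2 k l) : Set (ThetaChar l)) τ₂ ^ (2 ^ (i - m) * s) := by
  subst hV hn hm
  rw [Pset_blockDiag hτ₁.2 hτ₂.2 V, mul_pow, ← pow_mul, ← pow_mul]
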